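/- Let σ be a nonempty permutation. If a permutation φ is σ-narrow with a σ-core φ⁻, and σ contains no interval copy of φ and no interval copy of φ⁻, then φ is a σ-annihilator. -/

import Mathlib

/-!
The permutation pattern poset and its Möbius function.

A permutation of length `n` is represented as an element of the symmetric
group on `Fin n`; the collection of all permutations of all lengths is the
sigma type `PPerm`.  Pattern containment `PPerm.Le` makes `PPerm` into the
permutation pattern poset, and `mu` is its Möbius function, defined by the
usual recursion `μ(σ,σ) = 1`, `μ(σ,π) = -∑_{σ ≤ λ < π} μ(σ,λ)` for `σ < π`
and `μ(σ,π) = 0` otherwise.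
-/

open scoped Classical

/-- A permutation of an arbitrary finite length `n`, as an element of the
symmetric group on `Fin n`. -/
abbrev PPerm : Type := Σ n : ℕ, Equiv.Perm (Fin n)

namespace PPerm

/-- Classical pattern containment `σ ≤ π`: there is a strictly increasing map
of positions along which `π` realises the same relative order as `σ`. -/
def Le (σ π : PPerm) : Prop :=
  ∃ f : Fin σ.1 → Fin π.1, StrictMono f ∧
    ∀ a b : Fin σ.1, σ.2 a < σ.2 b ↔ π.2 (f a) < π.2 (f b)

/-- Strict pattern containment. -/
def Lt (σ π : PPerm) : Prop := Le σ π ∧ σ ≠ π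

/-- The permutation `1` of length one. -/
def one : PPerm := ⟨1, 1⟩

/-- The direct sum `α ⊕ β` of two permutations: `β` is placed after and
above `α`. -/
def dsum (α β : PPerm) : PPerm :=
  ⟨α.1 + β.1, finSumFinEquiv.symm.trans ((Equiv.sumCongr α.2 β.2).trans finSumFinEquiv)⟩

end PPerm

/-- Fuelled recursion computing the Möbius function of the permutation
pattern poset.  Any `λ` with `σ ≤ λ < π` has length `< |π|`, so for any
fuel `≥ |π| + 1` this computes the standard recursion
`μ(σ,σ) = 1`, `μ(σ,π) = -∑_{σ ≤ λ < π} μ(σ,λ)` for `σ < π`, and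
`μ(σ,π) = 0` when `σ ≰ π`. -/
noncomputable def muAux : ℕ → PPerm → PPerm → ℤ
  | 0, _, _ => 0
  | n + 1, σ, π =>
    if σ = π then 1
    else if PPerm.Le σ π then
      - ∑ m ∈ Finset.range π.1,
          ∑ p ∈ Finset.univ.filter
              (fun p : Equiv.Perm (Fin m) => PPerm.Le σ ⟨m, p⟩ ∧ PPerm.Le ⟨m, p⟩ π),
            muAux n σ ⟨m, p⟩
    else 0

/-- The Möbius function of the permutation pattern poset. -/
noncomputable def mu (σ π : PPerm) : ℤ := muAux (π.1 + 1) σ π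

/-- The closed interval `[σ, π]` of the permutation pattern poset, as a
finset (any `λ ≤ π` has length `≤ |π|`). -/
noncomputable def intervalCC (σ π : PPerm) : Finset PPerm :=
  (Finset.range (π.1 + 1)).biUnion fun m =>
    (Finset.univ.filter fun p : Equiv.Perm (Fin m) =>
        PPerm.Le σ ⟨m, p⟩ ∧ PPerm.Le ⟨m, p⟩ π).image fun p => (⟨m, p⟩ : PPerm)

/-- The half-open interval `[σ, π)` of the permutation pattern poset. -/
noncomputable def intervalCO (σ π : PPerm) : Finset PPerm :=
  (intervalCC σ π).filter fun lam => lam ≠ π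

/-- `π` contains an interval copy of `α`: there is a set of `|α|` contiguous
positions of `π` (starting at position `i`), whose values form a contiguous
range (starting at value `v`), and whose entries are order-isomorphic
to `α`. -/
def HasIntervalCopy (π α : PPerm) : Prop :=
  ∃ (f : Fin α.1 → Fin π.1) (i v : ℕ),
    (∀ a : Fin α.1, (f a : ℕ) = i + (a : ℕ)) ∧
    (∀ a : Fin α.1, v ≤ (π.2 (f a) : ℕ) ∧ (π.2 (f a) : ℕ) < v + α.1) ∧
    (∀ a b : Fin α.1, α.2 a < α.2 b ↔ π.2 (f a) < π.2 (f b))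

/-- `φ` is a `σ`-annihilator: every permutation containing an interval copy
of `φ` is a `σ`-zero, i.e. has `μ(σ,·) = 0`. -/
def IsSigmaAnnihilator (σ φ : PPerm) : Prop :=
  ∀ π : PPerm, HasIntervalCopy π φ → mu σ π = 0

/-- `φ` is `σ`-narrow with `σ`-core `φ⁻`: `φ⁻` is a permutation of length
`|φ| − 1` contained in `φ` such that every (nonempty) permutation in
`[1,φ) ∖ [1,φ⁻]` is a `σ`-annihilator. -/
def IsSigmaNarrowWithCore (σ φ φm : PPerm) : Prop :=
  φm.1 + 1 = φ.1 ∧ PPerm.Le φm φ ∧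
    ∀ lam : PPerm, 0 < lam.1 → PPerm.Lt lam φ → ¬ PPerm.Le lam φm →
      IsSigmaAnnihilator σ lam

/-!
Fix an interval copy of `φ` in `π` and delete from `π` the entries of this copy that do not belong
to a chosen copy of `φ⁻` in `φ`; this gives `ρ < π` with an interval copy of `φ⁻`. A pattern
`λ < π` meets the copy of `φ` in an interval copy of some `ψ ≤ φ`, and if `ψ ≤ φ⁻` then that part
of `λ` can be moved into the copy of `φ⁻`, whence `λ ≤ ρ`. So a `λ` in `[σ, π) ∖ [σ, ρ]` has an
interval copy either of a `σ`-annihilator or of `φ` itself, and `μ(σ, λ) = 0` by narrowness or by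
induction on `|π|`. Therefore `μ(σ, π) = -∑_{λ ∈ [σ, ρ]} μ(σ, λ) = 0`.
-/

section LinearOrder

lemma ordConnected_range_of_mem_Ico {m n : ℕ} {p : Fin m → Fin n} (hp : Function.Injective p)
    {v : ℕ} (hv : ∀ a, (p a : ℕ) ∈ Set.Ico v (v + m)) : (Set.range p).OrdConnected := by
  have image_eq : Finset.univ.image (fun a => (p a : ℕ)) = Finset.Ico v (v + m) := by
    refine Finset.eq_of_subset_of_card_le (fun x hx => ?_) ?_
    · obtain ⟨a, -, rfl⟩ := Finset.mem_image.1 hx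
      exact Finset.mem_Ico.2 (hv a)
    · rw [Finset.card_image_of_injective _ (f := fun a => (p a : ℕ)) (Fin.val_injective.comp hp)]
      simp
  have range_eq : Set.range p = Fin.val ⁻¹' Set.Ico v (v + m) := by
    ext y
    rw [Set.mem_preimage, ← Finset.coe_Ico, ← image_eq]
    simp [Fin.val_inj]
  rw [range_eq]
  exact Set.ordConnected_Ico.preimage_mono Fin.val_strictMono.monotone

lemma exists_val_eq_add_of_ordConnected_range {m n : ℕ} {k : Fin m → Fin n} (hk : StrictMono k)
    (hr : (Set.range k).OrdConnected) : ∃ i : ℕ, ∀ a, (k a : ℕ) = i + a := by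
  rcases m with _ | m
  · exact ⟨0, fun a => a.elim0⟩
  refine ⟨k 0, fun a => ?_⟩
  induction a using Fin.induction with
  | zero => simp
  | succ a ih =>
    have covBy : k a.castSucc ⋖ k a.succ :=
      (Set.OrdConnected.apply_covBy_apply_iff (OrderEmbedding.ofStrictMono k hk) hr).2
        (Fin.covBy_iff.2 (by simp))
    rw [← Nat.covBy_iff_add_one_eq.1 (Fin.covBy_iff.1 covBy), ih, Fin.val_castSucc, Fin.val_succ,
      add_assoc]

lemma strictMono_of_eq_off_ordConnected {α β : Type*} [Preorder α] [LinearOrder β] {h h' : α → β}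
    {I : Set β} (hI : I.OrdConnected) (hh : StrictMono h) (hmem : ∀ x, h x ∈ I → h' x ∈ I)
    (heq : ∀ x, h x ∉ I → h' x = h x)
    (hmono : ∀ x y, h x ∈ I → h y ∈ I → x < y → h' x < h' y) : StrictMono h' := by
  intro x y hxy
  have hlt := hh hxy
  by_cases hx : h x ∈ I <;> by_cases hy : h y ∈ I
  · exact hmono x y hx hy hxy
  · rw [heq y hy]
    by_contra! hle
    exact hy (hI.out hx (hmem x hx) ⟨hlt.le, hle⟩)
  · rw [heq x hx]
    by_contra! hle
    exact hx (hI.out (hmem y hy) hy ⟨hle, hlt.le⟩)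
  · rwa [heq x hx, heq y hy]

end LinearOrder

namespace PPerm

section Embedding

/-- `f` is an embedding of `σ` into `π`: it sends the positions of `σ` to the positions of an
occurrence of `σ` in `π`. Both the map on positions and the induced map on values increase, which
makes the notion symmetric in positions and values. -/
structure IsEmbedding (σ π : PPerm) (f : Fin σ.1 → Fin π.1) : Prop where
  strictMono : StrictMono f
  strictMono_values : StrictMono (π.2 ∘ f ∘ σ.2.symm)

variable {α β σ π : PPerm}

lemma IsEmbedding.lt_iff_lt {f : Fin σ.1 → Fin π.1} (hf : IsEmbedding σ π f) (a b : Fin σ.1) :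
    π.2 (f a) < π.2 (f b) ↔ σ.2 a < σ.2 b := by
  simpa using hf.strictMono_values.lt_iff_lt (a := σ.2 a) (b := σ.2 b)

lemma isEmbedding_iff {f : Fin σ.1 → Fin π.1} :
    IsEmbedding σ π f ↔
      StrictMono f ∧ ∀ a b, σ.2 a < σ.2 b ↔ π.2 (f a) < π.2 (f b) :=
  ⟨fun hf => ⟨hf.strictMono, fun a b => (hf.lt_iff_lt a b).symm⟩,
    fun ⟨hf, hlt⟩ => ⟨hf, fun _ _ hab => (hlt _ _).1 (by simpa using hab)⟩⟩

lemma le_iff_exists_isEmbedding : Le σ π ↔ ∃ f, IsEmbedding σ π f :=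
  exists_congr fun _ => isEmbedding_iff.symm

lemma IsEmbedding.le {f : Fin σ.1 → Fin π.1} (hf : IsEmbedding σ π f) : Le σ π :=
  le_iff_exists_isEmbedding.2 ⟨f, hf⟩

lemma IsEmbedding.comp {g : Fin β.1 → Fin π.1} {f : Fin α.1 → Fin β.1}
    (hg : IsEmbedding β π g) (hf : IsEmbedding α β f) : IsEmbedding α π (g ∘ f) where
  strictMono := hg.strictMono.comp hf.strictMono
  strictMono_values := by
    simpa [Function.comp_def] using hg.strictMono_values.comp hf.strictMono_values

lemma IsEmbedding.exists_comp_eq {f : Fin α.1 → Fin π.1} {g : Fin β.1 → Fin π.1}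
    (hf : IsEmbedding α π f) (hg : IsEmbedding β π g) (h : Set.range f ⊆ Set.range g) :
    ∃ k, IsEmbedding α β k ∧ g ∘ k = f := by
  obtain ⟨k, rfl⟩ := Set.range_subset_range_iff_exists_comp.1 h
  refine ⟨k, ⟨fun a b hab => hg.strictMono.lt_iff_lt.1 (hf.strictMono hab), fun a b hab => ?_⟩, rfl⟩
  exact (hg.lt_iff_lt _ _).1 (hf.strictMono_values hab)

lemma exists_isEmbedding_range_eq (π : PPerm) (S : Set (Fin π.1)) :
    ∃ (τ : PPerm) (f : Fin τ.1 → Fin π.1), IsEmbedding τ π f ∧ Set.range f = S := by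
  let positions : Fin (Fintype.card S) ≃o S := Fintype.orderIsoFinOfCardEq S rfl
  let values : Fin (Fintype.card S) ≃o π.2 '' S :=
    Fintype.orderIsoFinOfCardEq _ (Fintype.card_congr (π.2.image S).symm)
  let pattern : Equiv.Perm (Fin (Fintype.card S)) :=
    positions.toEquiv.trans ((π.2.image S).trans values.symm.toEquiv)
  have values_eq : π.2 ∘ (Subtype.val ∘ positions) ∘ pattern.symm = Subtype.val ∘ values := by
    funext b
    simp [pattern]
  refine ⟨⟨_, pattern⟩, Subtype.val ∘ positions, ⟨positions.strictMono, ?_⟩, ?_⟩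
  · exact values_eq ▸ values.strictMono
  · rw [Set.range_comp, positions.surjective.range_eq, Set.image_univ, Subtype.range_val]

end Embedding

section Le

variable {α β γ σ π : PPerm}

lemma Le.refl (σ : PPerm) : Le σ σ := ⟨id, strictMono_id, fun _ _ => Iff.rfl⟩

lemma Le.trans (hαβ : Le α β) (hβγ : Le β γ) : Le α γ := by
  obtain ⟨f, hf⟩ := le_iff_exists_isEmbedding.1 hαβ
  obtain ⟨g, hg⟩ := le_iff_exists_isEmbedding.1 hβγ
  exact (hg.comp hf).le

lemma Le.length_le (h : Le σ π) : σ.1 ≤ π.1 := by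
  obtain ⟨f, hf, -⟩ := h
  simpa using Fintype.card_le_of_injective f hf.injective

lemma Le.eq_of_length_eq (h : Le σ π) (hlen : σ.1 = π.1) : σ = π := by
  obtain ⟨f, hf⟩ := le_iff_exists_isEmbedding.1 h
  obtain ⟨n, p⟩ := σ
  obtain ⟨m, q⟩ := π
  obtain rfl : n = m := hlen
  have values_eq_id : q ∘ f ∘ p.symm = id := hf.strictMono_values.eq_id
  obtain rfl : f = id := hf.strictMono.eq_id
  congr 1
  ext1 a
  simpa using (congrFun values_eq_id (p a)).symm

lemma Lt.length_lt (h : Lt σ π) : σ.1 < π.1 :=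
  h.1.length_le.lt_of_ne fun hlen => h.2 (h.1.eq_of_length_eq hlen)

lemma le_of_length_eq_zero (h : σ.1 = 0) : Le σ π := by
  have : IsEmpty (Fin σ.1) := h ▸ Fin.isEmpty
  exact ⟨isEmptyElim, isEmptyElim, isEmptyElim⟩

end Le

section Interval

/-- `S` is the set of positions of an interval of `π`: contiguous positions with contiguous
values. -/
structure IsInterval (π : PPerm) (S : Set (Fin π.1)) : Prop where
  ordConnected : S.OrdConnected
  ordConnected_image : (π.2 '' S).OrdConnected

variable {φ φm lam ψ π : PPerm}

lemma hasIntervalCopy_iff_exists_isEmbedding :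
    HasIntervalCopy π φ ↔ ∃ f, IsEmbedding φ π f ∧ IsInterval π (Set.range f) := by
  constructor
  · rintro ⟨f, i, v, hpos, hval, hlt⟩
    have hmono : StrictMono f := fun a b hab => by
      rw [Fin.lt_def] at hab ⊢
      rw [hpos, hpos]
      omega
    refine ⟨f, isEmbedding_iff.2 ⟨hmono, hlt⟩, ?_, ?_⟩
    · exact ordConnected_range_of_mem_Ico hmono.injective (v := i) fun a => by simp [hpos]
    · rw [← Set.range_comp]
      exact ordConnected_range_of_mem_Ico (π.2.injective.comp hmono.injective) hval
  · rintro ⟨f, hf, hI⟩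
    obtain ⟨i, hi⟩ := exists_val_eq_add_of_ordConnected_range hf.strictMono hI.ordConnected
    have hval : (Set.range (π.2 ∘ f ∘ φ.2.symm)).OrdConnected := by
      rw [Set.range_comp, φ.2.symm.surjective.range_comp]
      exact hI.ordConnected_image
    obtain ⟨v, hv⟩ := exists_val_eq_add_of_ordConnected_range hf.strictMono_values hval
    refine ⟨f, i, v, hi, fun a => ?_, (isEmbedding_iff.1 hf).2⟩
    have val_eq : (π.2 (f a) : ℕ) = v + φ.2 a := by simpa using hv (φ.2 a)
    have := (φ.2 a).isLt
    omega

lemma IsInterval.preimage {S : Set (Fin π.1)} (hS : IsInterval π S) {h : Fin lam.1 → Fin π.1}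
    (hh : IsEmbedding lam π h) : IsInterval lam (h ⁻¹' S) where
  ordConnected := hS.ordConnected.preimage_mono hh.strictMono.monotone
  ordConnected_image := by
    have image_eq : lam.2 '' (h ⁻¹' S) = (π.2 ∘ h ∘ lam.2.symm) ⁻¹' (π.2 '' S) := by
      rw [Set.preimage_comp, Set.preimage_image_eq _ π.2.injective, Equiv.image_eq_preimage_symm,
        Set.preimage_comp]
    rw [image_eq]
    exact hS.ordConnected_image.preimage_mono hh.strictMono_values.monotone

/-- The part of an embedding that lands in an interval may be moved freely inside that interval,
as long as its pattern is kept. -/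
lemma IsInterval.isEmbedding_extend {S : Set (Fin π.1)} (hS : IsInterval π S)
    {h : Fin lam.1 → Fin π.1} (hh : IsEmbedding lam π h)
    {k : Fin ψ.1 → Fin lam.1} (hk : IsEmbedding ψ lam k) (hkS : Set.range k = h ⁻¹' S)
    {e : Fin ψ.1 → Fin π.1} (he : IsEmbedding ψ π e) (heS : Set.range e ⊆ S) :
    IsEmbedding lam π (Function.extend k e h) := by
  have extend_apply (a : Fin ψ.1) : Function.extend k e h (k a) = e a :=
    hk.strictMono.injective.extend_apply e h a
  have exists_eq {x : Fin lam.1} (hx : h x ∈ S) : ∃ a, k a = x := hkS.ge hx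
  have extend_mem (x : Fin lam.1) (hx : h x ∈ S) : Function.extend k e h x ∈ S := by
    obtain ⟨a, rfl⟩ := exists_eq hx
    exact (extend_apply a).symm ▸ heS ⟨a, rfl⟩
  have extend_eq (x : Fin lam.1) (hx : h x ∉ S) : Function.extend k e h x = h x :=
    Function.extend_apply' _ _ _ fun hx' => hx (hkS.le hx')
  constructor
  · refine strictMono_of_eq_off_ordConnected hS.ordConnected hh.strictMono extend_mem extend_eq ?_
    intro x y hx hy hxy
    obtain ⟨a, rfl⟩ := exists_eq hx
    obtain ⟨b, rfl⟩ := exists_eq hy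
    rw [extend_apply, extend_apply]
    exact he.strictMono (hk.strictMono.lt_iff_lt.1 hxy)
  · have mem_of_image (b : Fin lam.1) (hb : π.2 (h (lam.2.symm b)) ∈ π.2 '' S) :
        h (lam.2.symm b) ∈ S := π.2.injective.mem_set_image.1 hb
    refine strictMono_of_eq_off_ordConnected hS.ordConnected_image hh.strictMono_values
      (fun b hb => Set.mem_image_of_mem _ (extend_mem _ (mem_of_image b hb)))
      (fun b hb => congrArg π.2 (extend_eq _ (hb ∘ Set.mem_image_of_mem _))) ?_
    intro b c hb hc hbc
    obtain ⟨x, hx⟩ := exists_eq (mem_of_image b hb)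
    obtain ⟨y, hy⟩ := exists_eq (mem_of_image c hc)
    simp only [Function.comp_apply]
    rw [← hx, ← hy, extend_apply, extend_apply, he.lt_iff_lt, ← hk.lt_iff_lt, hx, hy]
    simpa using hbc

variable {ρ : PPerm} {f : Fin φ.1 → Fin π.1} {g : Fin φm.1 → Fin φ.1} {H : Fin ρ.1 → Fin π.1}

lemma lt_of_range_eq_compl_union (hf : IsEmbedding φ π f) (hg : IsEmbedding φm φ g)
    (hne : φm ≠ φ) (hH : IsEmbedding ρ π H)
    (hrange : Set.range H = (Set.range f)ᶜ ∪ Set.range (f ∘ g)) : Lt ρ π := by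
  refine ⟨hH.le, ?_⟩
  rintro rfl
  have H_surjective : Function.Surjective H :=
    Finite.surjective_of_injective hH.strictMono.injective
  have g_surjective : Function.Surjective g := fun x => by
    obtain ⟨a, ha⟩ := (hrange.le (H_surjective (f x))).resolve_left (not_not.2 ⟨x, rfl⟩)
    exact ⟨a, hf.strictMono.injective ha⟩
  refine hne (hg.le.eq_of_length_eq ?_)
  simpa using Fintype.card_of_bijective ⟨hg.strictMono.injective, g_surjective⟩

lemma hasIntervalCopy_of_range_eq_compl_union (hf : IsEmbedding φ π f)
    (hI : IsInterval π (Set.range f)) (hg : IsEmbedding φm φ g) (hH : IsEmbedding ρ π H)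
    (hrange : Set.range H = (Set.range f)ᶜ ∪ Set.range (f ∘ g)) : HasIntervalCopy ρ φm := by
  obtain ⟨k, hk, hkf⟩ := (hf.comp hg).exists_comp_eq hH (hrange ▸ Set.subset_union_right)
  have range_k : Set.range k = H ⁻¹' Set.range f := by
    ext x
    constructor
    · rintro ⟨a, rfl⟩
      exact ⟨g a, (congrFun hkf a).symm⟩
    · intro hx
      obtain ⟨a, ha⟩ := (hrange.le ⟨x, rfl⟩).resolve_left (not_not.2 hx)
      exact ⟨a, hH.strictMono.injective ((congrFun hkf a).trans ha)⟩
  exact hasIntervalCopy_iff_exists_isEmbedding.2 ⟨k, hk, range_k ▸ hI.preimage hH⟩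

lemma exists_hasIntervalCopy_of_range_eq_compl_union (hf : IsEmbedding φ π f)
    (hI : IsInterval π (Set.range f)) (hg : IsEmbedding φm φ g) (hH : IsEmbedding ρ π H)
    (hrange : Set.range H = (Set.range f)ᶜ ∪ Set.range (f ∘ g))
    (hle : Le lam π) (hnle : ¬ Le lam ρ) :
    ∃ ψ, Le ψ φ ∧ ¬ Le ψ φm ∧ HasIntervalCopy lam ψ := by
  obtain ⟨h, hh⟩ := le_iff_exists_isEmbedding.1 hle
  obtain ⟨ψ, k, hk, hkS⟩ := exists_isEmbedding_range_eq lam (h ⁻¹' Set.range f)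
  refine ⟨ψ, ?_, fun hψ => hnle ?_,
    hasIntervalCopy_iff_exists_isEmbedding.2 ⟨k, hk, hkS ▸ hI.preimage hh⟩⟩
  · obtain ⟨q, hq, -⟩ := (hh.comp hk).exists_comp_eq hf
      (Set.range_subset_iff.2 fun a => hkS.le ⟨a, rfl⟩)
    exact hq.le
  · obtain ⟨e, he⟩ := le_iff_exists_isEmbedding.1 hψ
    have hfge : IsEmbedding ψ π (f ∘ g ∘ e) := hf.comp (hg.comp he)
    have hextend := hI.isEmbedding_extend hh hk hkS hfge (Set.range_comp_subset_range _ _)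
    have range_subset : Set.range (Function.extend k (f ∘ g ∘ e) h) ⊆ Set.range H := by
      rw [hrange, Set.range_subset_iff]
      intro x
      by_cases hx : ∃ a, k a = x
      · obtain ⟨a, rfl⟩ := hx
        rw [hk.strictMono.injective.extend_apply]
        exact Or.inr ⟨e a, rfl⟩
      · rw [Function.extend_apply' _ _ _ hx]
        exact Or.inl fun hx' => hx (hkS.ge hx')
    obtain ⟨q, hq, -⟩ := hextend.exists_comp_eq hH range_subset
    exact hq.le

lemma exists_lt_of_hasIntervalCopy (hπ : HasIntervalCopy π φ) (hφm : Lt φm φ) :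
    ∃ ρ, Lt ρ π ∧ HasIntervalCopy ρ φm ∧ ∀ lam, Le lam π → ¬ Le lam ρ →
      ∃ ψ, Le ψ φ ∧ ¬ Le ψ φm ∧ HasIntervalCopy lam ψ := by
  obtain ⟨f, hf, hI⟩ := hasIntervalCopy_iff_exists_isEmbedding.1 hπ
  obtain ⟨g, hg⟩ := le_iff_exists_isEmbedding.1 hφm.1
  obtain ⟨ρ, H, hH, hrange⟩ :=
    exists_isEmbedding_range_eq π ((Set.range f)ᶜ ∪ Set.range (f ∘ g))
  exact ⟨ρ, lt_of_range_eq_compl_union hf hg hφm.2 hH hrange,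
    hasIntervalCopy_of_range_eq_compl_union hf hI hg hH hrange,
    fun _ => exists_hasIntervalCopy_of_range_eq_compl_union hf hI hg hH hrange⟩

end Interval

section Mobius

variable {σ π ρ lam : PPerm}

lemma mem_intervalCC : lam ∈ intervalCC σ π ↔ Le σ lam ∧ Le lam π := by
  constructor
  · intro h
    simp only [intervalCC, Finset.mem_biUnion, Finset.mem_image, Finset.mem_filter,
      Finset.mem_univ, true_and] at h
    obtain ⟨m, -, p, hp, rfl⟩ := h
    exact hp
  · intro h
    simp only [intervalCC, Finset.mem_biUnion, Finset.mem_image, Finset.mem_filter,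
      Finset.mem_univ, true_and]
    exact ⟨lam.1, Finset.mem_range.2 (Nat.lt_succ_of_le h.2.length_le), lam.2, h, rfl⟩

lemma mem_intervalCO : lam ∈ intervalCO σ π ↔ Le σ lam ∧ Lt lam π := by
  rw [intervalCO, Finset.mem_filter, mem_intervalCC, and_assoc, Lt]

lemma muAux_eq_muAux_of_length_lt {n n' : ℕ} (hn : π.1 < n) (hn' : π.1 < n') :
    muAux n σ π = muAux n' σ π := by
  induction n generalizing n' π with
  | zero => omega
  | succ n ih =>
    obtain _ | n' := n'
    · omega
    rw [muAux, muAux]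
    congr 3
    refine Finset.sum_congr rfl fun m hm => Finset.sum_congr rfl fun p _ => ?_
    have := Finset.mem_range.1 hm
    exact ih (π := ⟨m, p⟩) (by simp only; omega) (by simp only; omega)

lemma mu_eq_zero_of_not_le (h : ¬ Le σ π) : mu σ π = 0 := by
  have hne : σ ≠ π := fun hσπ => h (hσπ ▸ Le.refl σ)
  rw [mu, muAux, if_neg hne, if_neg h]

lemma mu_eq_neg_sum_intervalCO (h : Lt σ π) : mu σ π = -∑ lam ∈ intervalCO σ π, mu σ lam := by
  have interval_eq : intervalCO σ π = (Finset.range π.1).sigma fun m =>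
      Finset.univ.filter fun p : Equiv.Perm (Fin m) => Le σ ⟨m, p⟩ ∧ Le ⟨m, p⟩ π := by
    ext lam
    simp only [mem_intervalCO, Finset.mem_sigma, Finset.mem_range, Finset.mem_filter,
      Finset.mem_univ, true_and]
    refine ⟨fun hlam => ⟨hlam.2.length_lt, hlam.1, hlam.2.1⟩, fun hlam => ⟨hlam.2.1, hlam.2.2, ?_⟩⟩
    rintro rfl
    exact hlam.1.false
  rw [mu, muAux, if_neg h.2, if_pos h.1, interval_eq, Finset.sum_sigma]
  congr 1
  refine Finset.sum_congr rfl fun m hm => Finset.sum_congr rfl fun p _ => ?_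
  exact muAux_eq_muAux_of_length_lt (Finset.mem_range.1 hm) (Nat.lt_succ_self _)

lemma sum_intervalCC_mu_eq_zero (hne : σ ≠ π) : ∑ lam ∈ intervalCC σ π, mu σ lam = 0 := by
  by_cases hle : Le σ π
  · have hπ : π ∈ intervalCC σ π := mem_intervalCC.2 ⟨hle, Le.refl π⟩
    rw [← Finset.add_sum_erase _ _ hπ, ← Finset.filter_ne', ← intervalCO,
      mu_eq_neg_sum_intervalCO ⟨hle, hne⟩, neg_add_cancel]
  · refine Finset.sum_eq_zero fun lam hlam => absurd ?_ hle
    exact (mem_intervalCC.1 hlam).1.trans (mem_intervalCC.1 hlam).2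

lemma mu_eq_zero_of_lt_of_forall_not_le (hπ : σ ≠ π) (hρ : σ ≠ ρ) (hlt : Lt ρ π)
    (hzero : ∀ lam, Lt lam π → ¬ Le lam ρ → mu σ lam = 0) : mu σ π = 0 := by
  by_cases hle : Le σ π
  swap
  · exact mu_eq_zero_of_not_le hle
  have hsubset : intervalCC σ ρ ⊆ intervalCO σ π := fun lam hlam => by
    obtain ⟨hσ, hlamρ⟩ := mem_intervalCC.1 hlam
    refine mem_intervalCO.2 ⟨hσ, hlamρ.trans hlt.1, ?_⟩
    rintro rfl
    exact hlt.length_lt.not_ge hlamρ.length_le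
  calc mu σ π = -∑ lam ∈ intervalCO σ π, mu σ lam := mu_eq_neg_sum_intervalCO ⟨hle, hπ⟩
    _ = -∑ lam ∈ intervalCC σ ρ, mu σ lam := by
      rw [Finset.sum_subset hsubset fun lam hCO hCC => ?_]
      obtain ⟨hσ, hlam⟩ := mem_intervalCO.1 hCO
      exact hzero lam hlam fun hlamρ => hCC (mem_intervalCC.2 ⟨hσ, hlamρ⟩)
    _ = 0 := by rw [sum_intervalCC_mu_eq_zero hρ, neg_zero]

end Mobius

end PPerm

open PPerm

theorem sigmaNarrow_isSigmaAnnihilator_general (σ φ φm : PPerm) (hφm : Lt φm φ)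
    (hnarrow : ∀ lam : PPerm, 0 < lam.1 → Lt lam φ → ¬ Le lam φm → IsSigmaAnnihilator σ lam)
    (h₁ : ¬ HasIntervalCopy σ φ) (h₂ : ¬ HasIntervalCopy σ φm) :
    IsSigmaAnnihilator σ φ := by
  intro π
  induction hn : π.1 using Nat.strong_induction_on generalizing π with
  | _ n ih =>
    intro hπ
    obtain ⟨ρ, hρπ, hρ, hcopy⟩ := exists_lt_of_hasIntervalCopy hπ hφm
    refine mu_eq_zero_of_lt_of_forall_not_le (fun h => h₁ (h ▸ hπ)) (fun h => h₂ (h ▸ hρ)) hρπ ?_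
    intro lam hlam hlamρ
    obtain ⟨ψ, hψφ, hψφm, hψ⟩ := hcopy lam hlam.1 hlamρ
    by_cases hψ_eq : ψ = φ
    · subst hψ_eq
      exact ih lam.1 (hn ▸ hlam.length_lt) lam rfl hψ
    · have hpos : 0 < ψ.1 := Nat.pos_of_ne_zero fun h => hψφm (le_of_length_eq_zero h)
      exact hnarrow ψ hpos ⟨hψφ, hψ_eq⟩ hψφm lam hψ

/-- **(Proposition `pro-narrow`.)**  Let `σ` be a nonempty permutation.  If a
permutation `φ` is `σ`-narrow with a `σ`-core `φ⁻`, and `σ` has no interval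
copy of `φ` or of `φ⁻`, then `φ` is a `σ`-annihilator. -/
theorem sigmaNarrow_isSigmaAnnihilator (σ φ φm : PPerm) (hσ : 0 < σ.1)
    (hcore : IsSigmaNarrowWithCore σ φ φm)
    (h₁ : ¬ HasIntervalCopy σ φ) (h₂ : ¬ HasIntervalCopy σ φm) :
    IsSigmaAnnihilator σ φ :=
  sigmaNarrow_isSigmaAnnihilator_general σ φ φm
    ⟨hcore.2.1, fun h => by simpa [h] using hcore.1⟩ hcore.2.2 h₁ h₂
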